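/- Let γ ∈ ℝ be a finite corner of the min-plus characteristic polynomial P_A, let (U,V) be any Hungarian pair with respect to the matrix Â(γ), and let a^{(γ)} = a_0^{G_0} + X a_1^{G_1} + ⋯ + X^d a_d^{G_d} be the auxiliary pencil built with the graphs G_k = Sat_k(γ,U,V). If the polynomial det(a^{(γ)}) ∈ ℂ[X] has nonzero roots λ_1, …, λ_m, listed with multiplicity, then there exist ε₀ > 0 and functions L_1, …, L_m : (0, ε₀) → ℂ such that for every ε ∈ (0, ε₀) the multiset {L_1(ε), …, L_m(ε)} is a sub-multiset of the multiset of roots of det(𝒜_ε) (counted with multiplicity), and ε^{−γ} L_i(ε) → λ_i as ε → 0⁺ for every i = 1, …, m. -/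

import Mathlib

open Polynomial Filter Topology Finset

noncomputable section

/-- The min-plus semiring `ℝ ∪ {+∞}`, with `min` as addition and `+` as
multiplication (so `⊤ = +∞` is the min-plus zero `𝟘`). -/
abbrev Rmin := WithTop ℝ

/-- Min-plus permanent of a matrix: `perm B = min_σ Σ_i B_{i σ(i)}`. -/
def mpPerm {n : ℕ} (B : Matrix (Fin n) (Fin n) Rmin) : Rmin :=
  Finset.univ.inf fun σ : Equiv.Perm (Fin n) => ∑ i, B i (σ i)

/-- Coefficient of `X^m` in the min-plus characteristic polynomial
`P_A = perm (A_0 ⊕ X A_1 ⊕ ⋯ ⊕ X^d A_d)`: expanding the min-plus permanent of the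
pencil, the coefficient of `X^m` is the min over permutations `σ` and over
exponent choices `κ : Fin n → Fin (d+1)` with `Σ_i κ i = m` of `Σ_i (A_{κ i})_{i σ(i)}`. -/
def PAcoeff {n d : ℕ} (A : Fin (d + 1) → Matrix (Fin n) (Fin n) Rmin) (m : ℕ) : Rmin :=
  Finset.univ.inf fun σ : Equiv.Perm (Fin n) =>
    (Finset.univ.filter fun κ : Fin n → Fin (d + 1) => ∑ i, (κ i : ℕ) = m).inf
      fun κ => ∑ i, A (κ i) i (σ i)

/-- The polynomial function `P̂_A(γ) = min_m (P_m + m γ)` associated with the formal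
min-plus characteristic polynomial `P_A` (whose degree is at most `n * d`). -/
def PAhat {n d : ℕ} (A : Fin (d + 1) → Matrix (Fin n) (Fin n) Rmin) (γ : ℝ) : Rmin :=
  (Finset.range (n * d + 1)).inf fun m => PAcoeff A m + (((m : ℝ) * γ : ℝ) : Rmin)

/-- The set of exponents `m` achieving the minimum in `P̂_A(γ)` with a finite
coefficient (the "active" slopes of the concave piecewise linear function `P̂_A` at `γ`). -/
def activeSet {n d : ℕ} (A : Fin (d + 1) → Matrix (Fin n) (Fin n) Rmin) (γ : ℝ) : Finset ℕ :=
  (Finset.range (n * d + 1)).filter fun m =>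
    PAcoeff A m ≠ ⊤ ∧ PAcoeff A m + (((m : ℝ) * γ : ℝ) : Rmin) = PAhat A γ

/-- `γ ∈ ℝ` is a finite corner of `P_A` iff the piecewise linear concave function `P̂_A`
is not differentiable at `γ`, i.e. at least two distinct slopes are active at `γ`. -/
def IsFiniteCorner {n d : ℕ} (A : Fin (d + 1) → Matrix (Fin n) (Fin n) Rmin) (γ : ℝ) : Prop :=
  ∃ m₁ ∈ activeSet A γ, ∃ m₂ ∈ activeSet A γ, m₁ ≠ m₂

/-- Multiplicity of a finite corner `γ`: `P̂_A'(γ⁻) - P̂_A'(γ⁺)`, i.e. the largest active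
slope minus the smallest active slope at `γ`. -/
def cornerMult {n d : ℕ} (A : Fin (d + 1) → Matrix (Fin n) (Fin n) Rmin) (γ : ℝ) : ℕ :=
  (activeSet A γ).sup id - ((activeSet A γ).min).getD 0

/-- Valuation of `P_A`: smallest `k` whose coefficient is `≠ 𝟘`; this is the
multiplicity of the corner `𝟘 = +∞`. -/
def PAval {n d : ℕ} (A : Fin (d + 1) → Matrix (Fin n) (Fin n) Rmin) : ℕ :=
  sInf {m | PAcoeff A m ≠ ⊤}

/-- Degree of `P_A`: largest `k` whose coefficient is `≠ 𝟘`. -/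
def PAdeg {n d : ℕ} (A : Fin (d + 1) → Matrix (Fin n) (Fin n) Rmin) : ℕ :=
  sSup {m | PAcoeff A m ≠ ⊤}

/-- The matrix `Â(γ)`, with entries `Â_{ij}(γ) = min_{0 ≤ k ≤ d} ((A_k)_{ij} + k γ)`. -/
def AhatMat {n d : ℕ} (A : Fin (d + 1) → Matrix (Fin n) (Fin n) Rmin) (γ : ℝ) :
    Matrix (Fin n) (Fin n) Rmin :=
  fun i j => Finset.univ.inf fun k : Fin (d + 1) => A k i j + ((((k : ℕ) : ℝ) * γ : ℝ) : Rmin)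

/-- `(i,j)` is an arc of the digraph `Opt(B)` of arcs belonging to optimal assignments. -/
def OptArc {n : ℕ} (B : Matrix (Fin n) (Fin n) Rmin) (i j : Fin n) : Prop :=
  ∃ σ : Equiv.Perm (Fin n), σ i = j ∧ (∑ l, B l (σ l)) = mpPerm B

/-- `(i,j)` is an arc of the digraph `Opt_k(γ)`. -/
def OptK {n d : ℕ} (A : Fin (d + 1) → Matrix (Fin n) (Fin n) Rmin) (γ : ℝ)
    (k : Fin (d + 1)) (i j : Fin n) : Prop :=
  OptArc (AhatMat A γ) i j ∧ A k i j + ((((k : ℕ) : ℝ) * γ : ℝ) : Rmin) = AhatMat A γ i j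

/-- `(U, V)` is a Hungarian pair with respect to `B`. -/
def HungarianPair {n : ℕ} (B : Matrix (Fin n) (Fin n) Rmin) (U V : Fin n → ℝ) : Prop :=
  (∀ i j, ((U i + V j : ℝ) : Rmin) ≤ B i j) ∧
    (((∑ i, U i) + ∑ j, V j : ℝ) : Rmin) = mpPerm B

/-- `(i,j)` is an arc of the saturation graph `Sat(B,U,V)`. -/
def SatArc {n : ℕ} (B : Matrix (Fin n) (Fin n) Rmin) (U V : Fin n → ℝ) (i j : Fin n) : Prop :=
  B i j = ((U i + V j : ℝ) : Rmin)

/-- `(i,j)` is an arc of the digraph `Sat_k(γ, U, V)`. -/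
def SatK {n d : ℕ} (A : Fin (d + 1) → Matrix (Fin n) (Fin n) Rmin) (γ : ℝ)
    (U V : Fin n → ℝ) (k : Fin (d + 1)) (i j : Fin n) : Prop :=
  SatArc (AhatMat A γ) U V i j ∧
    A k i j + ((((k : ℕ) : ℝ) * γ : ℝ) : Rmin) = AhatMat A γ i j

open Classical in
/-- `b^G` : keep the entries of `b` on the arcs of the digraph `G`, set others to `0`. -/
def restrictG {n : ℕ} (b : Matrix (Fin n) (Fin n) ℂ) (G : Fin n → Fin n → Prop) :
    Matrix (Fin n) (Fin n) ℂ :=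
  fun i j => if G i j then b i j else 0

/-- The auxiliary pencil `a^{(γ)} = a_0^{G_0} + X a_1^{G_1} + ⋯ + X^d a_d^{G_d}`
built from digraphs `G_0, …, G_d`, as a matrix of polynomials in `ℂ[X]`. -/
def auxPencil {n d : ℕ} (a : Fin (d + 1) → Matrix (Fin n) (Fin n) ℂ)
    (G : Fin (d + 1) → Fin n → Fin n → Prop) : Matrix (Fin n) (Fin n) (Polynomial ℂ) :=
  fun i j => ∑ k : Fin (d + 1), Polynomial.C (restrictG (a k) (G k) i j) * X ^ (k : ℕ)

/-- The polynomial `det 𝒜_ε ∈ ℂ[X]` of the perturbed pencil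
`𝒜_ε = 𝒜_{ε,0} + X 𝒜_{ε,1} + ⋯ + X^d 𝒜_{ε,d}`, whose roots are the eigenvalues. -/
def pencilPoly {n d : ℕ} (𝒜 : ℝ → Fin (d + 1) → Matrix (Fin n) (Fin n) ℂ) (ε : ℝ) :
    Polynomial ℂ :=
  Matrix.det fun i j => ∑ k : Fin (d + 1), Polynomial.C (𝒜 ε k i j) * X ^ (k : ℕ)

/-- The perturbed pencil `𝒜_ε` has the asymptotics given by `(a_k, A_k)`:
`(𝒜_{ε,k})_{ij} = (a_k)_{ij} ε^{(A_k)_{ij}} + o(ε^{(A_k)_{ij}})` as `ε → 0⁺`,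
where `(A_k)_{ij} = +∞` means that the entry vanishes in a neighborhood of `0`. -/
def HasAsymptotics {n d : ℕ} (𝒜 : ℝ → Fin (d + 1) → Matrix (Fin n) (Fin n) ℂ)
    (a : Fin (d + 1) → Matrix (Fin n) (Fin n) ℂ)
    (A : Fin (d + 1) → Matrix (Fin n) (Fin n) Rmin) : Prop :=
  ∀ k i j,
    (A k i j = ⊤ → ∀ᶠ ε in 𝓝[>] (0 : ℝ), 𝒜 ε k i j = 0) ∧
    (∀ t : ℝ, A k i j = (t : Rmin) →
      (fun ε : ℝ => 𝒜 ε k i j - a k i j * ((ε ^ t : ℝ) : ℂ)) =o[𝓝[>] (0 : ℝ)]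
        fun ε : ℝ => (ε ^ t : ℝ))

/-!
Substituting `X ↦ ε^γ X` and scaling row `i` by `ε^{-U_i}` and column `j` by `ε^{-V_j}` turns
`det 𝒜_ε` into a polynomial whose roots are the eigenvalues of `𝒜_ε` divided by `ε^γ`. The entry
`(i, j)` of the `k`-th coefficient matrix becomes of order `ε^{(A_k)_{ij} + kγ - U_i - V_j}`.
The inequality `U_i + V_j ≤ Â_{ij}(γ)` makes this exponent nonnegative, and it vanishes exactly
on the arcs of `Sat_k(γ, U, V)`, so the scaled pencil converges to `a^{(γ)}`. It remains to follow
the roots of `det a^{(γ)}`. Leading coefficients may tend to zero, so that some roots escape to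
infinity, but if the roots of a polynomial of degree at most `N` all stay at distance `δ` from `μ`,
then its value at `μ` controls all its other values. Hence each root `μ` of a nonzero limit attracts
a root of the approximants, and dividing both sides by the corresponding linear factors gives all
the roots, with multiplicity.
-/

/-! ### Coefficientwise convergence of polynomials of bounded degree -/

/-- Coefficientwise convergence, along the filter `l`, of polynomials of degree at most `N` to a
polynomial of degree at most `N`. The degree of the limit may drop. -/
structure TendstoCoeff {ι R : Type*} [Semiring R] [TopologicalSpace R] (N : ℕ) (p : ι → R[X])
    (l : Filter ι) (q : R[X]) : Prop where
  natDegree_le : ∀ e, (p e).natDegree ≤ N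
  natDegree_limit_le : q.natDegree ≤ N
  tendsto_coeff : ∀ k, Tendsto (fun e => (p e).coeff k) l (𝓝 (q.coeff k))

namespace TendstoCoeff

section Semiring

variable {ι κ R : Type*} [Semiring R] [TopologicalSpace R] {l : Filter ι} {N : ℕ}

theorem eval [IsTopologicalSemiring R] {p : ι → R[X]} {q : R[X]} (h : TendstoCoeff N p l q)
    (z : R) : Tendsto (fun e => (p e).eval z) l (𝓝 (q.eval z)) := by
  simp only [fun e => eval_eq_sum_range' (Nat.lt_succ_of_le (h.natDegree_le e)) z,
    eval_eq_sum_range' (Nat.lt_succ_of_le h.natDegree_limit_le) z]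
  exact tendsto_finsetSum _ fun k _ => (h.tendsto_coeff k).mul_const _

theorem const_smul {S : Type*} [SMulZeroClass S R] [ContinuousConstSMul S R] {p : ι → R[X]}
    {q : R[X]} (h : TendstoCoeff N p l q) (c : S) :
    TendstoCoeff N (fun e => c • p e) l (c • q) where
  natDegree_le e := (natDegree_smul_le _ _).trans (h.natDegree_le e)
  natDegree_limit_le := (natDegree_smul_le _ _).trans h.natDegree_limit_le
  tendsto_coeff k := by simpa only [coeff_smul] using (h.tendsto_coeff k).const_smul c

theorem sum [ContinuousAdd R] {s : Finset κ} {f : κ → ι → R[X]} {g : κ → R[X]}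
    (h : ∀ i ∈ s, TendstoCoeff N (f i) l (g i)) :
    TendstoCoeff N (fun e => ∑ i ∈ s, f i e) l (∑ i ∈ s, g i) where
  natDegree_le e := natDegree_sum_le_of_forall_le _ _ fun i hi => (h i hi).natDegree_le e
  natDegree_limit_le := natDegree_sum_le_of_forall_le _ _ fun i hi => (h i hi).natDegree_limit_le
  tendsto_coeff k := by
    simpa only [finsetSum_coeff] using tendsto_finsetSum _ fun i hi => (h i hi).tendsto_coeff k

theorem C_mul_X_pow [ContinuousMul R] {c : ι → R} {b : R} (h : Tendsto c l (𝓝 b)) {k : ℕ}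
    (hk : k ≤ N) : TendstoCoeff N (fun e => C (c e) * X ^ k) l (C b * X ^ k) where
  natDegree_le e := (natDegree_C_mul_X_pow_le _ _).trans hk
  natDegree_limit_le := (natDegree_C_mul_X_pow_le _ _).trans hk
  tendsto_coeff j := by simpa only [coeff_C_mul] using h.mul_const _

end Semiring

section Ring

variable {ι R : Type*} [Ring R] [TopologicalSpace R] [IsTopologicalRing R] {l : Filter ι} {N : ℕ}

theorem divByMonic_X_sub_C {p : ι → R[X]} {q : R[X]} (h : TendstoCoeff N p l q) {x : ι → R}
    {μ : R} (hx : Tendsto x l (𝓝 μ)) :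
    TendstoCoeff N (fun e => p e /ₘ (X - C (x e))) l (q /ₘ (X - C μ)) where
  natDegree_le e := (natDegree_le_natDegree (degree_divByMonic_le _ _)).trans (h.natDegree_le e)
  natDegree_limit_le :=
    (natDegree_le_natDegree (degree_divByMonic_le _ _)).trans h.natDegree_limit_le
  tendsto_coeff k := by
    have coeff_eq : ∀ (f : R[X]) (y : R), f.natDegree ≤ N → (f /ₘ (X - C y)).coeff k =
        ∑ i ∈ Icc (k + 1) N, y ^ (i - (k + 1)) * f.coeff i := by
      intro f y hf
      rw [coeff_divByMonic_X_sub_C]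
      refine Finset.sum_subset (Icc_subset_Icc_right hf) fun i hi hi' => ?_
      rw [coeff_eq_zero_of_natDegree_lt (by grind), mul_zero]
    simp only [fun e => coeff_eq (p e) (x e) (h.natDegree_le e),
      coeff_eq q μ h.natDegree_limit_le]
    exact tendsto_finsetSum _ fun i _ => (hx.pow _).mul (h.tendsto_coeff i)

end Ring

section CommSemiring

variable {ι κ R : Type*} [CommSemiring R] [TopologicalSpace R] [IsTopologicalSemiring R]
  {l : Filter ι} {N : ℕ}

theorem prod {s : Finset κ} {f : κ → ι → R[X]} {g : κ → R[X]}
    (h : ∀ i ∈ s, TendstoCoeff N (f i) l (g i)) :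
    TendstoCoeff (#s * N) (fun e => ∏ i ∈ s, f i e) l (∏ i ∈ s, g i) where
  natDegree_le e := (natDegree_prod_le _ _).trans <|
    Finset.sum_le_card_nsmul _ _ _ fun i hi => (h i hi).natDegree_le e
  natDegree_limit_le := (natDegree_prod_le _ _).trans <|
    Finset.sum_le_card_nsmul _ _ _ fun i hi => (h i hi).natDegree_limit_le
  tendsto_coeff := by
    classical
    induction s using Finset.induction_on with
    | empty => simpa using fun k => tendsto_const_nhds
    | insert i s hi ih =>
      intro k
      simp only [Finset.prod_insert hi, coeff_mul]
      exact tendsto_finsetSum _ fun x _ => ((h i (mem_insert_self i s)).tendsto_coeff _).mul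
        (ih (fun j hj => h j (mem_insert_of_mem hj)) _)

end CommSemiring

theorem det {ι ν R : Type*} [CommRing R] [TopologicalSpace R] [IsTopologicalRing R] [Fintype ν]
    [DecidableEq ν] {l : Filter ι} {N : ℕ} {f : ι → Matrix ν ν R[X]} {g : Matrix ν ν R[X]}
    (h : ∀ i j, TendstoCoeff N (fun e => f e i j) l (g i j)) :
    TendstoCoeff (Fintype.card ν * N) (fun e => (f e).det) l g.det := by
  simp only [Matrix.det_apply]
  exact sum fun σ _ => (prod fun i _ => h (σ i) i).const_smul _

end TendstoCoeff

/-! ### Continuity of roots -/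

theorem norm_sub_le_mul_one_add_div {E : Type*} [SeminormedAddCommGroup E] {x μ r : E} {δ : ℝ}
    (hδ : 0 < δ) (hr : δ ≤ ‖μ - r‖) : ‖x - r‖ ≤ ‖μ - r‖ * (1 + ‖x - μ‖ / δ) :=
  calc ‖x - r‖ ≤ ‖x - μ‖ + ‖μ - r‖ := norm_sub_le_norm_sub_add_norm_sub _ _ _
    _ = δ * (‖x - μ‖ / δ) + ‖μ - r‖ := by rw [mul_div_cancel₀ _ hδ.ne']
    _ ≤ ‖μ - r‖ * (‖x - μ‖ / δ) + ‖μ - r‖ := by gcongr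
    _ = ‖μ - r‖ * (1 + ‖x - μ‖ / δ) := by ring

theorem norm_eval_le_of_forall_mem_roots_le_norm_sub {K : Type*} [NormedField K] {p : K[X]}
    (hp : p.Splits) {N : ℕ} (hN : p.natDegree ≤ N) {μ : K} {δ : ℝ} (hδ : 0 < δ)
    (h : ∀ r ∈ p.roots, δ ≤ ‖μ - r‖) (z : K) :
    ‖p.eval z‖ ≤ ‖p.eval μ‖ * (1 + ‖z - μ‖ / δ) ^ N := by
  have norm_eval (x : K) :
      ‖p.eval x‖ = ‖p.leadingCoeff‖ * (p.roots.map fun r => ‖x - r‖).prod := by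
    rw [hp.eval_eq_prod_roots, norm_mul]
    congr 1
    exact (map_multiset_prod (normHom : K →*₀ ℝ) _).trans (by simp [Multiset.map_map])
  have hone_le : 1 ≤ 1 + ‖z - μ‖ / δ := le_add_of_nonneg_right (by positivity)
  have hcard : p.roots.card ≤ N := p.card_roots'.trans hN
  calc ‖p.eval z‖
      ≤ ‖p.leadingCoeff‖ * (p.roots.map fun r => ‖μ - r‖ * (1 + ‖z - μ‖ / δ)).prod := by
        rw [norm_eval]
        gcongr
        exact Multiset.prod_map_le_prod_map₀ _ _ (fun r _ => norm_nonneg _)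
          fun r hr => norm_sub_le_mul_one_add_div hδ (h r hr)
    _ = ‖p.eval μ‖ * (1 + ‖z - μ‖ / δ) ^ p.roots.card := by
        rw [norm_eval, Multiset.prod_map_mul, Multiset.map_const', Multiset.prod_replicate,
          mul_assoc]
    _ ≤ ‖p.eval μ‖ * (1 + ‖z - μ‖ / δ) ^ N := by gcongr

theorem exists_tendsto_of_eventually_exists_dist_lt {ι α : Type*} [PseudoMetricSpace α]
    {l : Filter ι} {s : ι → Finset α} {x : α}
    (h : ∀ δ > 0, ∀ᶠ e in l, ∃ y ∈ s e, dist y x < δ) :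
    ∃ f : ι → α, (∀ᶠ e in l, f e ∈ s e) ∧ Tendsto f l (𝓝 x) := by
  have exists_closest (e : ι) :
      ∃ y, (s e).Nonempty → y ∈ s e ∧ ∀ z ∈ s e, dist y x ≤ dist z x := by
    by_cases hs : (s e).Nonempty
    · obtain ⟨y, hy⟩ := (s e).exists_min_image (dist · x) hs
      exact ⟨y, fun _ => hy⟩
    · exact ⟨x, fun hs' => absurd hs' hs⟩
  choose f hf using exists_closest
  refine ⟨f, ?_, Metric.tendsto_nhds.mpr fun δ hδ => ?_⟩
  · filter_upwards [h 1 one_pos] with e ⟨y, hy, _⟩ using (hf e ⟨y, hy⟩).1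
  · filter_upwards [h δ hδ] with e ⟨y, hy, hyδ⟩
    exact ((hf e ⟨y, hy⟩).2 y hy).trans_lt hyδ

theorem roots_eq_cons_roots_divByMonic {R : Type*} [CommRing R] [IsDomain R] {p : R[X]} {x : R}
    (hx : x ∈ p.roots) : p.roots = x ::ₘ (p /ₘ (X - C x)).roots := by
  have hmul : (X - C x) * (p /ₘ (X - C x)) = p :=
    mul_divByMonic_eq_iff_isRoot.mpr (isRoot_of_mem_roots hx)
  conv_lhs => rw [← hmul]
  rw [roots_mul (hmul.symm ▸ ne_zero_of_mem_roots hx), roots_X_sub_C, Multiset.singleton_add]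

namespace TendstoCoeff

variable {ι K : Type*} [NormedField K] [IsAlgClosed K] {l : Filter ι} {N : ℕ} {p : ι → K[X]}
  {q : K[X]}

theorem exists_tendsto_root (h : TendstoCoeff N p l q) {μ : K} (hμ : μ ∈ q.roots) :
    ∃ M : ι → K, (∀ᶠ e in l, M e ∈ (p e).roots) ∧ Tendsto M l (𝓝 μ) := by
  classical
  obtain ⟨z, hz⟩ : ∃ z, q.eval z ≠ 0 := by
    by_contra! hq
    exact ne_zero_of_mem_roots hμ (Polynomial.funext fun z => by simpa using hq z)
  suffices hroot : ∀ δ > 0, ∀ᶠ e in l, ∃ r ∈ (p e).roots.toFinset, dist r μ < δ by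
    simpa only [Multiset.mem_toFinset] using exists_tendsto_of_eventually_exists_dist_lt hroot
  intro δ hδ
  have hbound : Tendsto (fun e => ‖(p e).eval μ‖ * (1 + ‖z - μ‖ / δ) ^ N) l (𝓝 0) := by
    simpa [(isRoot_of_mem_roots hμ).eq_zero] using
      (h.eval μ).norm.mul_const ((1 + ‖z - μ‖ / δ) ^ N)
  filter_upwards [hbound.eventually_lt (h.eval z).norm (norm_pos_iff.mpr hz)] with e he
  by_contra! hfar
  refine he.not_ge (norm_eval_le_of_forall_mem_roots_le_norm_sub (IsAlgClosed.splits _)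
    (h.natDegree_le e) hδ (fun r hr => ?_) z)
  rw [← dist_eq_norm, dist_comm]
  exact hfar r (Multiset.mem_toFinset.mpr hr)

theorem exists_tendsto_roots {κ : Type*} (s : Finset κ) (lam : κ → K) (h : TendstoCoeff N p l q)
    (hlam : s.val.map lam ≤ q.roots) :
    ∃ M : κ → ι → K, (∀ᶠ e in l, s.val.map (fun i => M i e) ≤ (p e).roots) ∧
      ∀ i ∈ s, Tendsto (M i) l (𝓝 (lam i)) := by
  classical
  induction s using Finset.induction_on generalizing p q with
  | empty => exact ⟨fun _ _ => 0, by simp, by simp⟩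
  | insert i s hi ih =>
    have map_insert (f : κ → K) : (insert i s).val.map f = f i ::ₘ s.val.map f := by
      rw [insert_val_of_notMem hi, Multiset.map_cons]
    rw [map_insert] at hlam
    have hroot : lam i ∈ q.roots := Multiset.mem_of_le hlam (Multiset.mem_cons_self _ _)
    obtain ⟨x, hx, hx_lim⟩ := h.exists_tendsto_root hroot
    rw [roots_eq_cons_roots_divByMonic hroot, Multiset.cons_le_cons_iff] at hlam
    obtain ⟨M, hM, hM_lim⟩ := ih (h.divByMonic_X_sub_C hx_lim) hlam
    have update_eq : ∀ j ∈ s, Function.update M i x j = M j := fun j hj =>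
      Function.update_of_ne (ne_of_mem_of_not_mem hj hi) _ _
    refine ⟨Function.update M i x, ?_, fun j hj => ?_⟩
    · filter_upwards [hM, hx] with e hMe hxe
      rw [map_insert, Function.update_self, roots_eq_cons_roots_divByMonic hxe,
        Multiset.cons_le_cons_iff,
        Multiset.map_congr rfl fun j hj => congrFun (update_eq j hj) e]
      exact hMe
    · rcases mem_insert.mp hj with rfl | hj
      · simpa using hx_lim
      · simpa only [update_eq j hj] using hM_lim j hj

end TendstoCoeff

/-! ### Diagonal scaling of matrix pencils -/

/-- The matrix pencil `B_0 + X B_1 + ⋯ + X^d B_d`, as a matrix of polynomials.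
Unfolding definitions, `auxPencil a G` and the matrix in `pencilPoly 𝒜 ε` are of this form. -/
def matrixPencil {R ν : Type*} [Semiring R] {d : ℕ} (B : Fin (d + 1) → Matrix ν ν R) :
    Matrix ν ν R[X] :=
  fun i j => ∑ k : Fin (d + 1), C (B k i j) * X ^ (k : ℕ)

theorem TendstoCoeff.det_matrixPencil {ι ν R : Type*} [CommRing R] [TopologicalSpace R]
    [IsTopologicalRing R] [Fintype ν] [DecidableEq ν] {d : ℕ} {l : Filter ι}
    {B : ι → Fin (d + 1) → Matrix ν ν R} {b : Fin (d + 1) → Matrix ν ν R}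
    (h : ∀ k i j, Tendsto (fun e => B e k i j) l (𝓝 (b k i j))) :
    TendstoCoeff (Fintype.card ν * d) (fun e => (matrixPencil (B e)).det) l
      (matrixPencil b).det :=
  .det fun i j => .sum fun k _ => .C_mul_X_pow (h k i j) k.is_le

/-- The coefficients of the pencil obtained from `∑ X^k B_k` by the substitution `X ↦ x X` and by
scaling row `i` by `r i` and column `j` by `c j`. -/
def scalePencil {R ν : Type*} [CommSemiring R] {d : ℕ} (r c : ν → R) (x : R)
    (B : Fin (d + 1) → Matrix ν ν R) : Fin (d + 1) → Matrix ν ν R :=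
  fun k i j => r i * c j * x ^ (k : ℕ) * B k i j

theorem det_matrixPencil_scalePencil {R ν : Type*} [CommRing R] [Fintype ν] [DecidableEq ν]
    {d : ℕ} (r c : ν → R) (x : R) (B : Fin (d + 1) → Matrix ν ν R) :
    (matrixPencil (scalePencil r c x B)).det =
      C ((∏ i, r i) * ∏ j, c j) * (matrixPencil B).det.comp (C x * X) := by
  have hentry : matrixPencil (scalePencil r c x B) = Matrix.of fun i j => C (r i) *
      Matrix.of (fun i j => C (c j) * (compRingHom (C x * X)).mapMatrix (matrixPencil B) i j)
        i j := by
    ext1 i j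
    simp only [matrixPencil, scalePencil, Matrix.of_apply, RingHom.mapMatrix_apply,
      Matrix.map_apply, coe_compRingHom_apply, Polynomial.sum_comp, Finset.mul_sum, mul_comp,
      C_comp, pow_comp, X_comp, C_mul, C_pow, mul_pow]
    exact Finset.sum_congr rfl fun k _ => by ring
  rw [hentry, Matrix.det_mul_column, Matrix.det_mul_row, ← RingHom.map_det,
    coe_compRingHom_apply, C_mul, map_prod, map_prod, mul_assoc]

theorem map_mul_roots_det_scalePencil {R ν : Type*} [CommRing R] [IsDomain R] [Fintype ν]
    [DecidableEq ν] {d : ℕ} {r c : ν → R} (hr : ∀ i, r i ≠ 0) (hc : ∀ j, c j ≠ 0) {x : R}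
    (hx : IsUnit x) (B : Fin (d + 1) → Matrix ν ν R) :
    (matrixPencil (scalePencil r c x B)).det.roots.map (x * ·) = (matrixPencil B).det.roots := by
  rw [det_matrixPencil_scalePencil, roots_C_mul _ (mul_ne_zero
    (Finset.prod_ne_zero_iff.mpr fun i _ => hr i) (Finset.prod_ne_zero_iff.mpr fun j _ => hc j))]
  simpa using map_roots_comp_C_mul_X_add_C (matrixPencil B).det x 0 hx

/-! ### Asymptotics of the scaled pencil -/

theorem tendsto_rpow_nhdsGT_zero {s : ℝ} (hs : 0 < s) :
    Tendsto (fun ε : ℝ => ε ^ s) (𝓝[>] 0) (𝓝 0) := by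
  simpa [Real.zero_rpow hs.ne'] using
    (Real.continuousAt_rpow_const 0 s (.inr hs.le)).tendsto.mono_left nhdsWithin_le_nhds

theorem tendsto_rpow_neg_mul_of_isLittleO {f : ℝ → ℂ} {c : ℂ} {t : ℝ}
    (hf : (fun ε => f ε - c * ((ε ^ t : ℝ) : ℂ)) =o[𝓝[>] 0] fun ε : ℝ => ε ^ t) :
    Tendsto (fun ε : ℝ => ((ε ^ (-t) : ℝ) : ℂ) * f ε) (𝓝[>] 0) (𝓝 c) := by
  have hlim := hf.tendsto_inv_smul_nhds_zero.add_const c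
  rw [zero_add] at hlim
  refine hlim.congr' ?_
  filter_upwards [self_mem_nhdsWithin] with ε hε
  have hne : ((ε ^ t : ℝ) : ℂ) ≠ 0 := mod_cast (Real.rpow_pos_of_pos hε t).ne'
  rw [Real.rpow_neg (le_of_lt hε), Complex.real_smul, Complex.ofReal_inv]
  field_simp
  ring

theorem tendsto_rpow_mul_zero_of_isLittleO {f : ℝ → ℂ} {c : ℂ} {s t : ℝ}
    (hf : (fun ε => f ε - c * ((ε ^ t : ℝ) : ℂ)) =o[𝓝[>] 0] fun ε : ℝ => ε ^ t) (hs : 0 < s + t) :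
    Tendsto (fun ε : ℝ => ((ε ^ s : ℝ) : ℂ) * f ε) (𝓝[>] 0) (𝓝 0) := by
  have hpow : Tendsto (fun ε : ℝ => ((ε ^ (s + t) : ℝ) : ℂ)) (𝓝[>] 0) (𝓝 0) :=
    mod_cast (Complex.continuous_ofReal.tendsto 0).comp (tendsto_rpow_nhdsGT_zero hs)
  have hlim := hpow.mul (tendsto_rpow_neg_mul_of_isLittleO hf)
  rw [zero_mul] at hlim
  refine hlim.congr' ?_
  filter_upwards [self_mem_nhdsWithin] with ε hε
  rw [← mul_assoc, ← Complex.ofReal_mul, ← Real.rpow_add hε, add_neg_cancel_right]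

section TropicalScaling

variable {n d : ℕ} {A : Fin (d + 1) → Matrix (Fin n) (Fin n) Rmin} {γ : ℝ} {U V : Fin n → ℝ}

theorem AhatMat_le (k : Fin (d + 1)) (i j : Fin n) :
    AhatMat A γ i j ≤ A k i j + ((((k : ℕ) : ℝ) * γ : ℝ) : Rmin) :=
  Finset.inf_le (f := fun k : Fin (d + 1) => A k i j + ((((k : ℕ) : ℝ) * γ : ℝ) : Rmin))
    (mem_univ k)

theorem satK_iff_add_eq {i j : Fin n} (hUV : ((U i + V j : ℝ) : Rmin) ≤ AhatMat A γ i j)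
    {k : Fin (d + 1)} :
    SatK A γ U V k i j ↔
      A k i j + ((((k : ℕ) : ℝ) * γ : ℝ) : Rmin) = ((U i + V j : ℝ) : Rmin) := by
  refine ⟨fun h => h.2.trans h.1, fun h => ?_⟩
  have heq : AhatMat A γ i j = ((U i + V j : ℝ) : Rmin) :=
    ((AhatMat_le k i j).trans h.le).antisymm hUV
  exact ⟨heq, h.trans heq.symm⟩

/-- The coefficients of the pencil obtained from `𝒜_ε` by the substitution `X ↦ ε^γ X` and by
scaling row `i` by `ε^{-U_i}` and column `j` by `ε^{-V_j}`; under the asymptotic assumptions they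
converge to those of the auxiliary pencil. -/
def tropicalScaling (𝒜 : ℝ → Fin (d + 1) → Matrix (Fin n) (Fin n) ℂ) (γ : ℝ) (U V : Fin n → ℝ)
    (ε : ℝ) : Fin (d + 1) → Matrix (Fin n) (Fin n) ℂ :=
  scalePencil (fun i => ((ε ^ (-U i) : ℝ) : ℂ)) (fun j => ((ε ^ (-V j) : ℝ) : ℂ))
    ((ε ^ γ : ℝ) : ℂ) (𝒜 ε)

variable {𝒜 : ℝ → Fin (d + 1) → Matrix (Fin n) (Fin n) ℂ}

theorem tropicalScaling_apply {ε : ℝ} (hε : 0 < ε) (k : Fin (d + 1)) (i j : Fin n) :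
    tropicalScaling 𝒜 γ U V ε k i j =
      ((ε ^ (((k : ℕ) : ℝ) * γ - (U i + V j)) : ℝ) : ℂ) * 𝒜 ε k i j := by
  have hpow : ε ^ (((k : ℕ) : ℝ) * γ - (U i + V j)) =
      ε ^ (-U i) * ε ^ (-V j) * (ε ^ γ) ^ (k : ℕ) := by
    rw [← Real.rpow_mul_natCast hε.le, ← Real.rpow_add hε, ← Real.rpow_add hε]
    ring_nf
  rw [hpow]
  push_cast
  rfl

theorem map_mul_roots_det_tropicalScaling {ε : ℝ} (hε : 0 < ε) :
    (matrixPencil (tropicalScaling 𝒜 γ U V ε)).det.roots.map (((ε ^ γ : ℝ) : ℂ) * ·) =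
      (pencilPoly 𝒜 ε).roots := by
  have rpow_ne_zero (t : ℝ) : ((ε ^ t : ℝ) : ℂ) ≠ 0 := mod_cast (Real.rpow_pos_of_pos hε t).ne'
  exact map_mul_roots_det_scalePencil (fun _ => rpow_ne_zero _) (fun _ => rpow_ne_zero _)
    (rpow_ne_zero γ).isUnit (𝒜 ε)

theorem tendsto_tropicalScaling {a : Fin (d + 1) → Matrix (Fin n) (Fin n) ℂ}
    (hasym : HasAsymptotics 𝒜 a A) {i j : Fin n}
    (hUV : ((U i + V j : ℝ) : Rmin) ≤ AhatMat A γ i j) (k : Fin (d + 1)) :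
    Tendsto (fun ε => tropicalScaling 𝒜 γ U V ε k i j) (𝓝[>] 0)
      (𝓝 (restrictG (a k) (SatK A γ U V k) i j)) := by
  suffices hlim : Tendsto (fun ε : ℝ =>
      ((ε ^ (((k : ℕ) : ℝ) * γ - (U i + V j)) : ℝ) : ℂ) * 𝒜 ε k i j) (𝓝[>] 0)
      (𝓝 (restrictG (a k) (SatK A γ U V k) i j)) by
    refine hlim.congr' ?_
    filter_upwards [self_mem_nhdsWithin] with ε hε using (tropicalScaling_apply hε k i j).symm
  have hsat := satK_iff_add_eq hUV (k := k)
  have hle := hUV.trans (AhatMat_le k i j)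
  induction hA : A k i j using WithTop.recTopCoe with
  | top =>
    have hnot : ¬ SatK A γ U V k i j := by
      rw [hsat, hA, top_add]
      exact WithTop.top_ne_coe
    rw [restrictG, if_neg hnot]
    refine tendsto_const_nhds.congr' ?_
    filter_upwards [(hasym k i j).1 hA] with ε hε
    rw [hε, mul_zero]
  | coe t =>
    rw [hA] at hsat hle
    norm_cast at hsat hle
    rcases hle.eq_or_lt with heq | hlt
    · rw [restrictG, if_pos (hsat.mpr heq.symm), heq, sub_add_cancel_right]
      exact tendsto_rpow_neg_mul_of_isLittleO ((hasym k i j).2 t hA)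
    · rw [restrictG, if_neg fun h => hlt.ne' (hsat.mp h)]
      exact tendsto_rpow_mul_zero_of_isLittleO ((hasym k i j).2 t hA) (by linarith)

end TropicalScaling

theorem mainTheorem_sat_part_general {ι : Type*} [Fintype ι] {n d : ℕ}
    {𝒜 : ℝ → Fin (d + 1) → Matrix (Fin n) (Fin n) ℂ}
    {a : Fin (d + 1) → Matrix (Fin n) (Fin n) ℂ}
    {A : Fin (d + 1) → Matrix (Fin n) (Fin n) Rmin} (hasym : HasAsymptotics 𝒜 a A) {γ : ℝ}
    {U V : Fin n → ℝ} (hUV : ∀ i j, ((U i + V j : ℝ) : Rmin) ≤ AhatMat A γ i j) {lam : ι → ℂ}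
    (hlam : univ.val.map lam ≤ (auxPencil a (SatK A γ U V)).det.roots) :
    ∃ ε₀ > (0 : ℝ), ∃ L : ι → ℝ → ℂ,
      (∀ ε ∈ Set.Ioo (0 : ℝ) ε₀, univ.val.map (fun i => L i ε) ≤ (pencilPoly 𝒜 ε).roots) ∧
      ∀ i, Tendsto (fun ε : ℝ => ((ε ^ (-γ) : ℝ) : ℂ) * L i ε) (𝓝[>] (0 : ℝ)) (𝓝 (lam i)) := by
  have hconv := TendstoCoeff.det_matrixPencil fun k i j =>
    tendsto_tropicalScaling hasym (hUV i j) k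
  obtain ⟨M, hM, hM_lim⟩ := hconv.exists_tendsto_roots univ lam hlam
  obtain ⟨ε₀, hε₀, hM⟩ := mem_nhdsGT_iff_exists_Ioo_subset.mp hM
  refine ⟨ε₀, hε₀, fun i ε => ((ε ^ γ : ℝ) : ℂ) * M i ε, fun ε hε => ?_, fun i => ?_⟩
  · rw [← map_mul_roots_det_tropicalScaling (γ := γ) (U := U) (V := V) hε.1]
    simpa only [Multiset.map_map, Function.comp_def] using
      Multiset.map_le_map (f := (((ε ^ γ : ℝ) : ℂ) * ·)) (hM hε)
  · refine (hM_lim i (mem_univ i)).congr' ?_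
    filter_upwards [self_mem_nhdsWithin] with ε hε
    rw [← mul_assoc, ← Complex.ofReal_mul, ← Real.rpow_add hε, neg_add_cancel, Real.rpow_zero,
      Complex.ofReal_one, one_mul]

/-- **Theorem 1 (first part, with `G_k = Sat_k(γ,U,V)`).**
Let `γ ∈ ℝ` be a finite corner of the min-plus characteristic polynomial `P_A`, let
`(U, V)` be any Hungarian pair with respect to `Â(γ)`, and let `a^{(γ)}` be the auxiliary
pencil built with the graphs `G_k = Sat_k(γ, U, V)`.  If `det a^{(γ)} ∈ ℂ[X]` has nonzero
roots `λ_1, …, λ_m` (with multiplicity), then there are `ε₀ > 0` and functions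
`L_1, …, L_m : (0, ε₀) → ℂ` such that for every `ε ∈ (0, ε₀)` the multiset
`{L_1 ε, …, L_m ε}` is a sub-multiset of the roots of `det 𝒜_ε` (with multiplicity),
and `ε^{-γ} L_i ε → λ_i` as `ε → 0⁺`. -/
theorem mainTheorem_sat_part
    (n d : ℕ) (hn : 1 ≤ n)
    (𝒜 : ℝ → Fin (d + 1) → Matrix (Fin n) (Fin n) ℂ)
    (a : Fin (d + 1) → Matrix (Fin n) (Fin n) ℂ)
    (A : Fin (d + 1) → Matrix (Fin n) (Fin n) Rmin)
    (hcont : ∀ k i j, ContinuousOn (fun ε : ℝ => 𝒜 ε k i j) (Set.Ioi 0))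
    (hasym : HasAsymptotics 𝒜 a A)
    (γ : ℝ) (hγ : IsFiniteCorner A γ)
    (U V : Fin n → ℝ) (hUV : HungarianPair (AhatMat A γ) U V)
    (m : ℕ) (lam : Fin m → ℂ)
    (hlam : ((auxPencil a (SatK A γ U V)).det.roots.filter (· ≠ 0)) =
      Multiset.map lam Finset.univ.val) :
    ∃ ε₀ > (0 : ℝ), ∃ L : Fin m → ℝ → ℂ,
      (∀ ε ∈ Set.Ioo (0 : ℝ) ε₀,
        Multiset.map (fun i => L i ε) Finset.univ.val ≤ (pencilPoly 𝒜 ε).roots) ∧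
      ∀ i, Tendsto (fun ε : ℝ => ((ε ^ (-γ) : ℝ) : ℂ) * L i ε) (𝓝[>] (0 : ℝ))
        (𝓝 (lam i)) :=
  mainTheorem_sat_part_general hasym hUV.1 (hlam ▸ Multiset.filter_le _ _)
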